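/- arXiv:2304.02540 — 3 statements merged into one kernel-verified Lean document; each statement's English description precedes it below -/
import Mathlib

section
/- Let k ≥ 1 be an integer and β a real number with δ = β − (k−1) < 0, and let ε > 0 be arbitrarily small. Then there exist positive constants q_k, C and x₀ (depending on β, k, δ, ε) such that for all x ≥ x₀ and all y with 0 < y < x, one has φ_{Φ_k,β}(x,y) ≤ C · x^{1/2 + (1−δ)ε} · y^{1/(2(1−δ)) − ε} · exp(−√(q_k · log x · log log x)). -/
open Filter Real

/-- `Φ_k(n)`: the number of `k`-tuples `(x_1, …, x_k)` over `ℤ/nℤ` such that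
`x_1² + ⋯ + x_k²` is a unit modulo `n`. -/
noncomputable def genTotient (k n : ℕ) : ℕ :=
  Nat.card {x : Fin k → ZMod n // IsUnit (∑ i, x i ^ 2)}

/-- The counting function `φ_{Φ_k,β}(x,y) = #{n ≤ x : Φ_k(n)/n^β ≤ y}`. -/
noncomputable def phiCount (k : ℕ) (β x y : ℝ) : ℕ :=
  Nat.card {n : ℕ | 0 < n ∧ (n : ℝ) ≤ x ∧ (genTotient k n : ℝ) / (n : ℝ) ^ β ≤ y}

/-- `α_k(p)`: the value of the multiplicative function `α_k` at a prime `p`. -/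
noncomputable def alphaK (k p : ℕ) : ℝ :=
  if p = 2 then 1 else 1 - (-1 : ℝ) ^ (k * (p - 1) / 4) / (p : ℝ) ^ (k / 2)

/-- The Euler product `R_{k,β}(z)` for real `z > 0`. -/
noncomputable def eulerR (k : ℕ) (z : ℝ) : ℝ :=
  ∏' p : Nat.Primes, (1 - 1 / (p : ℝ) + 1 / (p : ℝ) * ((p : ℝ) / ((p : ℝ) - 1)) ^ z *
    (if Even k then (alphaK k p) ^ (-z) else 1))

/-- Number of `x` modulo `n` with `s + x²` a unit. -/
noncomputable def unitCount (n : ℕ) (s : ZMod n) : ℕ :=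
  Nat.card {x : ZMod n // IsUnit (s + x ^ 2)}

theorem isUnit_zmod_prime_pow {p e : ℕ} (hp : p.Prime) (he : 0 < e) (z : ZMod (p ^ e)) :
    IsUnit z ↔ (ZMod.castHom (dvd_pow_self p he.ne') (ZMod p)) z ≠ 0 := by
  have := Fact.mk hp
  have : NeZero (p ^ e) := ⟨(pow_pos hp.pos e).ne'⟩
  obtain ⟨m, rfl⟩ := ZMod.natCast_zmod_surjective z
  rw [ZMod.isUnit_iff_coprime, map_natCast, Ne, ZMod.natCast_eq_zero_iff,
    Nat.coprime_pow_right_iff he, Nat.coprime_comm, hp.coprime_iff_not_dvd]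

theorem exists_good_prime {p : ℕ} (hp : p.Prime) (s x : ZMod p) :
    s + x ^ 2 ≠ 0 ∨ s + (x + 1) ^ 2 ≠ 0 ∨ s + (x + 2) ^ 2 ≠ 0 := by
  have := Fact.mk hp
  by_contra! h
  obtain ⟨h0, h1, h2⟩ := h
  have e1 : 2 * x + 1 = 0 := by linear_combination h1 - h0
  have e2 : (2 : ZMod p) = 0 := by linear_combination h2 - 2 * h1 + h0
  have : (1 : ZMod p) = 0 := by linear_combination e1 - x * e2
  exact one_ne_zero this

theorem unitCount_prime_pow {p e : ℕ} (hp : p.Prime) (he : 0 < e) (s : ZMod (p ^ e)) :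
    p ^ e ≤ 3 * unitCount (p ^ e) s := by
  classical
  have : NeZero (p ^ e) := ⟨(pow_pos hp.pos e).ne'⟩
  set G : Finset (ZMod (p ^ e)) := Finset.univ.filter (fun x => IsUnit (s + x ^ 2)) with hG
  have hc : unitCount (p ^ e) s = G.card := by
    rw [unitCount, Nat.card_eq_fintype_card, Fintype.card_subtype]
  have hcov : (Finset.univ : Finset (ZMod (p ^ e))) ⊆
      G ∪ (G.image (fun x => x - 1) ∪ G.image (fun x => x - 2)) := by
    intro x _
    have key := exists_good_prime hp (ZMod.castHom (dvd_pow_self p he.ne') (ZMod p) s)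
      (ZMod.castHom (dvd_pow_self p he.ne') (ZMod p) x)
    simp only [Finset.mem_union, Finset.mem_image, hG, Finset.mem_filter, Finset.mem_univ,
      true_and]
    rcases key with h | h | h
    · left
      rw [isUnit_zmod_prime_pow hp he]
      simpa only [map_add, map_pow] using h
    · right; left
      refine ⟨x + 1, ?_, by ring⟩
      rw [isUnit_zmod_prime_pow hp he]
      simpa only [map_add, map_pow, map_one] using h
    · right; right
      refine ⟨x + 2, ?_, by ring⟩
      rw [isUnit_zmod_prime_pow hp he]
      simpa only [map_add, map_pow, map_ofNat] using h
  have h1 := Finset.card_le_card hcov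
  rw [Finset.card_univ, ZMod.card] at h1
  have h2 := Finset.card_union_le G (G.image (fun x => x - 1) ∪ G.image (fun x => x - 2))
  have h3 := Finset.card_union_le (G.image (fun x => x - 1)) (G.image (fun x => x - 2))
  have h4 : (G.image (fun x => x - 1)).card ≤ G.card := Finset.card_image_le
  have h5 : (G.image (fun x => x - 2)).card ≤ G.card := Finset.card_image_le
  omega

theorem unitCount_mul {a b : ℕ} (hab : a.Coprime b) (s : ZMod (a * b)) :
    unitCount (a * b) s = unitCount a (ZMod.chineseRemainder hab s).1 *
      unitCount b (ZMod.chineseRemainder hab s).2 := by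
  rw [unitCount, unitCount, unitCount, ← Nat.card_prod]
  refine Nat.card_congr (((ZMod.chineseRemainder hab).toEquiv.subtypeEquiv
    (q := fun z : ZMod a × ZMod b => IsUnit ((ZMod.chineseRemainder hab s).1 + z.1 ^ 2) ∧
      IsUnit ((ZMod.chineseRemainder hab s).2 + z.2 ^ 2)) ?_).trans
      (Equiv.subtypeProdEquivProd
        (p := fun z : ZMod a => IsUnit ((ZMod.chineseRemainder hab s).1 + z ^ 2))
        (q := fun z : ZMod b => IsUnit ((ZMod.chineseRemainder hab s).2 + z ^ 2))))
  intro x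
  rw [← MulEquiv.isUnit_map (ZMod.chineseRemainder hab), map_add, map_pow, Prod.isUnit_iff]
  rfl

theorem unitCount_lower_aux (η : ℝ) (P : ℕ) (hη : 0 < η) (hη0 : 3 ≤ (P : ℝ) ^ η) (n : ℕ) :
    0 < n → ∀ s : ZMod n,
      (n : ℝ) ^ (1 - η) ≤ 3 ^ (n.primeFactors.filter (· < P)).card * (unitCount n s : ℝ) := by
  induction n using Nat.recOnPosPrimePosCoprime with
  | zero => intro h; omega
  | one =>
    intro _ s
    have : 0 < unitCount 1 s := by
      rw [unitCount]
      have : Nonempty {x : ZMod 1 // IsUnit (s + x ^ 2)} := ⟨0, isUnit_of_subsingleton _⟩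
      exact Nat.card_pos
    have h : (1 : ℝ) ≤ (unitCount 1 s : ℝ) := by exact_mod_cast this
    simpa using h
  | prime_pow p e hp he =>
    intro _ s
    have h := unitCount_prime_pow hp he s
    have h' : ((p ^ e : ℕ) : ℝ) ≤ 3 * (unitCount (p ^ e) s : ℝ) := by exact_mod_cast h
    have hpos : (0 : ℝ) < ((p ^ e : ℕ) : ℝ) := by exact_mod_cast pow_pos hp.pos e
    have h1 : (1 : ℝ) ≤ ((p ^ e : ℕ) : ℝ) := by exact_mod_cast Nat.one_le_pow e p hp.pos
    rw [Nat.primeFactors_prime_pow he.ne' hp]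
    by_cases hP : p < P
    · rw [Finset.filter_singleton, if_pos hP, Finset.card_singleton, pow_one]
      refine le_trans ?_ h'
      calc ((p ^ e : ℕ) : ℝ) ^ (1 - η) ≤ ((p ^ e : ℕ) : ℝ) ^ (1 : ℝ) :=
            Real.rpow_le_rpow_of_exponent_le h1 (by linarith)
        _ = _ := Real.rpow_one _
    · rw [Finset.filter_singleton, if_neg hP, Finset.card_empty, pow_zero, one_mul]
      have h3 : 3 ≤ ((p ^ e : ℕ) : ℝ) ^ η := by
        refine hη0.trans (Real.rpow_le_rpow (by positivity) ?_ hη.le)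
        have : P ≤ p ^ e := (not_lt.mp hP).trans (Nat.le_self_pow he.ne' p)
        exact_mod_cast this
      rw [Real.rpow_sub hpos, Real.rpow_one, div_le_iff₀ (by positivity)]
      have : (0 : ℝ) ≤ (unitCount (p ^ e) s : ℝ) := by positivity
      nlinarith
  | coprime a b ha hb hab iha ihb =>
    intro _ s
    have h1 := iha (by omega) (ZMod.chineseRemainder hab s).1
    have h2 := ihb (by omega) (ZMod.chineseRemainder hab s).2
    rw [unitCount_mul hab s, hab.primeFactors_mul, Finset.filter_union,
      Finset.card_union_of_disjoint
        (Finset.disjoint_filter_filter hab.disjoint_primeFactors), pow_add]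
    push_cast
    rw [Real.mul_rpow (by positivity) (by positivity)]
    refine (mul_le_mul h1 h2 (by positivity) (by positivity)).trans (le_of_eq (by ring))

theorem unitCount_lower (η : ℝ) (hη : 0 < η) : ∃ c : ℝ, 0 < c ∧
    ∀ n : ℕ, 0 < n → ∀ s : ZMod n, c * (n : ℝ) ^ (1 - η) ≤ (unitCount n s : ℝ) := by
  obtain ⟨P, hP⟩ := (((tendsto_rpow_atTop hη).comp
    tendsto_natCast_atTop_atTop).eventually_ge_atTop 3).exists
  refine ⟨((3 : ℝ) ^ P)⁻¹, by positivity, fun n hn s => ?_⟩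
  have h := unitCount_lower_aux η P hη hP n hn s
  have hc : (n.primeFactors.filter (· < P)).card ≤ P := by
    have : n.primeFactors.filter (· < P) ⊆ Finset.range P := by
      intro q hq
      exact Finset.mem_range.mpr (Finset.mem_filter.mp hq).2
    simpa using Finset.card_le_card this
  rw [inv_mul_le_iff₀ (by positivity)]
  refine h.trans (mul_le_mul_of_nonneg_right ?_ (by positivity))
  exact pow_le_pow_right₀ (by norm_num) hc

theorem genTotient_succ (m n : ℕ) [NeZero n] :
    genTotient (m + 1) n = ∑ v : Fin m → ZMod n, unitCount n (∑ i, v i ^ 2) := by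
  classical
  unfold genTotient unitCount
  rw [← Nat.card_sigma]
  refine Nat.card_congr ?_
  exact
    { toFun := fun x => ⟨fun i => x.1 i.succ, x.1 0, by
        have := x.2
        rw [Fin.sum_univ_succ, add_comm] at this
        exact this⟩
      invFun := fun z => ⟨Fin.cons z.2.1 z.1, by
        rw [Fin.sum_univ_succ, add_comm]
        simpa using z.2.2⟩
      left_inv := fun x => by
        ext i
        refine Fin.cases ?_ (fun j => ?_) i <;> simp
      right_inv := fun z => by
        rcases z with ⟨v, w, hw⟩
        rfl }

theorem genTotient_lower (k : ℕ) (hk : 1 ≤ k) (η : ℝ) (hη : 0 < η) : ∃ c : ℝ, 0 < c ∧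
    ∀ n : ℕ, 0 < n → c * (n : ℝ) ^ ((k : ℝ) - η) ≤ (genTotient k n : ℝ) := by
  obtain ⟨c, hc, h⟩ := unitCount_lower η hη
  refine ⟨c, hc, fun n hn => ?_⟩
  obtain ⟨m, rfl⟩ : ∃ m, k = m + 1 := ⟨k - 1, by omega⟩
  have : NeZero n := ⟨hn.ne'⟩
  have hn' : (0 : ℝ) < n := by exact_mod_cast hn
  rw [genTotient_succ]
  push_cast
  calc c * (n : ℝ) ^ ((m : ℝ) + 1 - η)
      = ∑ _v : Fin m → ZMod n, c * (n : ℝ) ^ (1 - η) := by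
        rw [Finset.sum_const, Finset.card_univ, Fintype.card_fun, ZMod.card, Fintype.card_fin,
          nsmul_eq_mul, add_sub_assoc, Real.rpow_add hn', Real.rpow_natCast]
        push_cast
        ring
    _ ≤ _ := Finset.sum_le_sum (fun v _ => h n hn _)

theorem phiCount_upper (k : ℕ) (hk : 1 ≤ k) (β η b : ℝ) (hη : 0 < η) (hb : 0 < b)
    (hkb : (k : ℝ) - η - β = b) : ∃ C : ℝ, 0 < C ∧
    ∀ x y : ℝ, 0 < y → (phiCount k β x y : ℝ) ≤ C * y ^ (1 / b) := by
  obtain ⟨c, hc, h⟩ := genTotient_lower k hk η hη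
  refine ⟨(1 / c) ^ (1 / b), by positivity, fun x y hy => ?_⟩
  rw [← Real.mul_rpow (by positivity) hy.le]
  set Z := (1 / c * y) ^ (1 / b) with hZ
  have hZ0 : 0 ≤ Z := by positivity
  have hsub : {n : ℕ | 0 < n ∧ (n : ℝ) ≤ x ∧ (genTotient k n : ℝ) / (n : ℝ) ^ β ≤ y} ⊆
      ((Finset.Ioc 0 ⌊Z⌋₊ : Finset ℕ) : Set ℕ) := by
    rintro n ⟨hn, -, hny⟩
    have hn' : (0 : ℝ) < n := by exact_mod_cast hn
    rw [Finset.mem_coe, Finset.mem_Ioc]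
    refine ⟨hn, Nat.le_floor ?_⟩
    have h1 : c * (n : ℝ) ^ b ≤ y := by
      refine le_trans ?_ hny
      rw [le_div_iff₀ (by positivity), mul_assoc, ← Real.rpow_add hn']
      have hbk : b + β = (k : ℝ) - η := by linarith
      rw [hbk]
      exact h n hn
    have h2 : (n : ℝ) ^ b ≤ 1 / c * y := by
      rw [one_div, le_inv_mul_iff₀ hc]; exact h1
    have h3 := Real.rpow_le_rpow (by positivity) h2 (by positivity : 0 ≤ 1 / b)
    rwa [← Real.rpow_mul hn'.le, mul_one_div_cancel hb.ne', Real.rpow_one] at h3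
  have h1 := Set.ncard_le_ncard hsub (Finset.finite_toSet _)
  rw [Set.ncard_coe_finset, Nat.card_Ioc, Nat.sub_zero] at h1
  have h2 : phiCount k β x y ≤ ⌊Z⌋₊ := h1
  exact (Nat.cast_le.mpr h2).trans (Nat.floor_le hZ0)

/-- Theorem 3 (thm5): upper bound for `φ_{Φ_k,β}(x,y)` for `δ < 0` and `0 < y < x`. -/
theorem thm5 (k : ℕ) (hk : 1 ≤ k) (β δ : ℝ) (hδ : δ = β - ((k : ℝ) - 1))
    (hδ0 : δ < 0) (ε : ℝ) (hε : 0 < ε) :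
    ∃ qk C x₀ : ℝ, 0 < qk ∧ 0 < C ∧ 0 < x₀ ∧
      ∀ x y : ℝ, x₀ ≤ x → 0 < y → y < x →
        (phiCount k β x y : ℝ) ≤
          C * x ^ (1 / 2 + (1 - δ) * ε) * y ^ (1 / (2 * (1 - δ)) - ε) *
            Real.exp (-Real.sqrt (qk * Real.log x * Real.log (Real.log x))) := by
  obtain ⟨a, ha⟩ : ∃ a, a = 1 - δ := ⟨_, rfl⟩
  have ha1 : 1 < a := by linarith
  rw [← ha]
  obtain ⟨b, hb⟩ : ∃ b, b = (a + 1) / 2 := ⟨_, rfl⟩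
  have hb0 : 0 < b := by linarith
  obtain ⟨C, hC, hcount⟩ := phiCount_upper k hk β ((a - 1) / 2) b (by linarith) hb0 (by linarith)
  obtain ⟨t, ht⟩ : ∃ t, t = 1 / b - 1 / (2 * a) + ε := ⟨_, rfl⟩
  have ht0 : 0 ≤ t := by
    have : 1 / (2 * a) ≤ 1 / b := one_div_le_one_div_of_le hb0 (by linarith)
    linarith
  obtain ⟨g, hg⟩ : ∃ g, g = 1 / 2 + a * ε - t := ⟨_, rfl⟩
  have hg0 : 0 < g := by
    have h1 : 1 / 2 + 1 / (2 * a) - 1 / b = (a - 1) ^ 2 / (2 * a * (a + 1)) := by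
      rw [hb]; field_simp; ring
    have h2 : 0 ≤ (a - 1) ^ 2 / (2 * a * (a + 1)) := by positivity
    nlinarith
  refine ⟨g ^ 2, C, Real.exp 1, by positivity, hC, Real.exp_pos 1, ?_⟩
  intro x y hx hy hyx
  have hx0 : 0 < x := (Real.exp_pos 1).trans_le hx
  have hL : 1 ≤ Real.log x := (Real.le_log_iff_exp_le hx0).mpr hx
  have hsq : Real.sqrt (g ^ 2 * Real.log x * Real.log (Real.log x)) ≤ g * Real.log x := by
    rw [Real.sqrt_le_left (by positivity)]
    have := Real.log_le_self (by linarith : 0 ≤ Real.log x)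
    calc g ^ 2 * Real.log x * Real.log (Real.log x) ≤ g ^ 2 * Real.log x * Real.log x := by
          gcongr
      _ = _ := by ring
  have hE : x ^ (-g) ≤ Real.exp (-Real.sqrt (g ^ 2 * Real.log x * Real.log (Real.log x))) := by
    rw [Real.rpow_def_of_pos hx0]
    exact Real.exp_le_exp.mpr (by linarith)
  have hyt : y ^ t ≤ x ^ t := Real.rpow_le_rpow hy.le hyx.le ht0
  calc (phiCount k β x y : ℝ) ≤ C * y ^ (1 / b) := hcount x y hy
    _ = C * y ^ t * y ^ (1 / (2 * a) - ε) := by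
        rw [mul_assoc, ← Real.rpow_add hy]; congr 2; linarith
    _ ≤ C * x ^ t * y ^ (1 / (2 * a) - ε) := by gcongr
    _ = C * x ^ (1 / 2 + a * ε) * y ^ (1 / (2 * a) - ε) * x ^ (-g) := by
        have : x ^ t = x ^ (1 / 2 + a * ε) * x ^ (-g) := by
          rw [← Real.rpow_add hx0]; congr 1; linarith
        rw [this]; ring
    _ ≤ _ := by gcongr
end

section
/- For every integer k ≥ 1, the limsuperior as n → ∞ of Φ_k(n)/n^k equals 1; that is, the maximal order of Φ_k(n) is n^k. -/
open Filter Real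

lemma zeros_card_le (m p : ℕ) [Fact p.Prime] :
    (Finset.univ.filter (fun x : Fin (m+1) → ZMod p => ∑ i, x i ^ 2 = 0)).card ≤ 2 * p ^ m := by
  classical
  refine (Finset.card_le_mul_card_image (f := fun x : Fin (m+1) → ZMod p => Fin.tail x) _ 2 ?_).trans ?_
  · intro b hb
    obtain ⟨x, hx, rfl⟩ := Finset.mem_image.1 hb
    refine (Finset.card_le_card (t := {x, Fin.cons (-x 0) (Fin.tail x)}) ?_).trans Finset.card_le_two
    intro y hy
    simp only [Finset.mem_filter, Finset.mem_univ, true_and] at hx hy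
    obtain ⟨hy, hyx⟩ := hy
    rw [Fin.sum_univ_succ] at hx hy
    have h1 : ∀ i : Fin m, y i.succ = x i.succ := fun i => congrFun hyx i
    simp only [h1] at hy
    have h2 : y 0 ^ 2 = x 0 ^ 2 := by
      linear_combination hy - hx
    rw [Finset.mem_insert, Finset.mem_singleton]
    rcases sq_eq_sq_iff_eq_or_eq_neg.1 h2 with h | h
    · left
      funext i
      refine Fin.cases h h1 i
    · right
      funext i
      refine Fin.cases ?_ ?_ i
      · simpa using h
      · intro j
        simpa [Fin.tail] using h1 j
  · refine Nat.mul_le_mul_left _ ((Finset.card_le_univ _).trans ?_)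
    simp [ZMod.card]

lemma genTotient_le (k n : ℕ) (hn : 1 ≤ n) : genTotient k n ≤ n ^ k := by
  have : NeZero n := ⟨by omega⟩
  refine (Finite.card_subtype_le _).trans ?_
  simp [Nat.card_eq_fintype_card, ZMod.card]

lemma genTotient_prime (m p : ℕ) (hp : p.Prime) :
    p ^ (m+1) ≤ genTotient (m+1) p + 2 * p ^ m := by
  classical
  have : Fact p.Prime := ⟨hp⟩
  have h := zeros_card_le m p
  have h2 := Finset.card_filter_add_card_filter_not (s := (Finset.univ : Finset (Fin (m+1) → ZMod p)))
    (fun x => ∑ i, x i ^ 2 = 0)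
  have h3 : genTotient (m+1) p =
      (Finset.univ.filter (fun x : Fin (m+1) → ZMod p => ¬ ∑ i, x i ^ 2 = 0)).card := by
    unfold genTotient
    rw [Nat.card_eq_fintype_card, Fintype.card_subtype]
    simp only [isUnit_iff_ne_zero, ne_eq]
  have h4 : (Finset.univ : Finset (Fin (m+1) → ZMod p)).card = p ^ (m+1) := by
    simp [ZMod.card]
  omega

/-- Theorem 6 (kodd): the maximal order of `Φ_k(n)` is `n^k`. -/
theorem maximal_order (k : ℕ) (hk : 1 ≤ k) :
    Filter.limsup (fun n : ℕ => (genTotient k n : ℝ) / (n : ℝ) ^ k) Filter.atTop = 1 := by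
  have hub : ∀ᶠ n : ℕ in atTop, (genTotient k n : ℝ) / (n : ℝ) ^ k ≤ 1 := by
    filter_upwards [eventually_ge_atTop 1] with n hn
    apply div_le_one_of_le₀ _ (by positivity)
    exact_mod_cast genTotient_le k n hn
  have hlb : IsBoundedUnder (· ≥ ·) atTop (fun n : ℕ => (genTotient k n : ℝ) / (n : ℝ) ^ k) :=
    isBoundedUnder_of ⟨0, fun n => by positivity⟩
  apply le_antisymm
  · exact limsup_le_of_le hlb.isCoboundedUnder_le hub
  · refine le_of_forall_lt_imp_le_of_dense fun c hc => ?_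
    refine le_limsup_of_frequently_le ?_ ⟨1, by simpa using hub⟩
    rw [frequently_atTop]
    intro N
    obtain ⟨M, hM⟩ := exists_nat_gt (2 / (1 - c))
    obtain ⟨p, hpge, hp⟩ := Nat.exists_infinite_primes (max N M)
    refine ⟨p, (le_max_left _ _).trans hpge, ?_⟩
    obtain ⟨m, rfl⟩ : ∃ m, k = m + 1 := ⟨k - 1, by omega⟩
    have h := genTotient_prime m p hp
    have h' : (p : ℝ) ^ (m+1) ≤ genTotient (m+1) p + 2 * (p:ℝ) ^ m := by exact_mod_cast h
    have hp0 : (0:ℝ) < p := by exact_mod_cast hp.pos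
    have hMp : (M : ℝ) ≤ p := by exact_mod_cast (le_max_right _ _).trans hpge
    have h5 : 2 < p * (1 - c) := (div_lt_iff₀ (by linarith)).1 (hM.trans_le hMp)
    rw [le_div_iff₀ (by positivity)]
    have h6 : 0 < (p:ℝ) ^ m := by positivity
    have := mul_lt_mul_of_pos_right h5 h6
    rw [pow_succ] at h' ⊢
    nlinarith
end

section
/- For every odd integer k ≥ 1, the liminferior as n → ∞ of Φ_k(n) · log log n / n^k equals e^{−γ}, where γ is the Euler–Mascheroni constant; that is, the minimal order of Φ_k(n) is e^{−γ} n^k / log log n. -/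
open Filter Real

lemma log_factorial_primes (N : ℕ) : Real.log (N.factorial) =
    ∑ p ∈ (Finset.range (N+1)).filter Nat.Prime, ((N.factorial).factorization p : ℝ) * Real.log p := by
  have h := Nat.prod_factorization_pow_eq_self (Nat.factorial_ne_zero N)
  rw [Finsupp.prod_of_support_subset (s := (Finset.range (N+1)).filter Nat.Prime)] at h
  · have h2 : ((N.factorial : ℕ):ℝ) = ∏ p ∈ (Finset.range (N+1)).filter Nat.Prime, (p:ℝ)^((N.factorial).factorization p) := by
      conv_lhs => rw [← h]
      push_cast
      rfl
    rw [h2, Real.log_prod]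
    · apply Finset.sum_congr rfl
      intro p hp
      rw [Real.log_pow]
    · intro p hp
      have := (Finset.mem_filter.1 hp).2.pos
      positivity
  · intro p hp
    simp only [Nat.support_factorization, Nat.mem_primeFactors] at hp
    rw [Finset.mem_filter, Finset.mem_range]
    exact ⟨Nat.lt_succ_of_le ((Nat.Prime.dvd_factorial hp.1).1 hp.2.1), hp.1⟩
  · simp

lemma log_factorial_bounds (N : ℕ) (hN : 1 ≤ N) : N * Real.log N - N ≤ Real.log (N.factorial) ∧
    Real.log (N.factorial) ≤ N * Real.log N := by
  constructor
  · have h1 : (N:ℝ)^N / N.factorial ≤ Real.exp N := by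
      exact Real.pow_div_factorial_le_exp (N:ℝ) (by positivity) N
    have hp : (0:ℝ) < N := by exact_mod_cast hN
    have h2 := Real.log_le_log (by positivity) h1
    rw [Real.log_div (by positivity) (by positivity), Real.log_pow, Real.log_exp] at h2
    linarith
  · rw [← Real.log_pow]
    apply Real.log_le_log (by positivity)
    exact_mod_cast Nat.factorial_le_pow N

lemma log_le_two_sqrt (x : ℝ) (hx : 0 < x) : Real.log x ≤ 2 * x ^ (1/2:ℝ) := by
  have := Real.log_le_rpow_div hx.le (ε := 1/2) (by norm_num)
  linarith

lemma summable_log_corr : Summable (fun n : ℕ => if n.Prime then Real.log n / (n * (n - 1)) else 0) := by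
  have : Summable (fun n : ℕ => 4 * (1 / (n:ℝ) ^ (3/2:ℝ))) := by
    apply Summable.mul_left
    exact Real.summable_one_div_nat_rpow.2 (by norm_num)
  refine Summable.of_nonneg_of_le ?_ ?_ this
  · intro n
    split_ifs with h
    · have : (2:ℝ) ≤ n := by exact_mod_cast h.two_le
      have := Real.log_nonneg (show (1:ℝ) ≤ n by linarith)
      apply div_nonneg this
      nlinarith
    · exact le_rfl
  · intro n
    split_ifs with h
    · have h2 : (2:ℝ) ≤ n := by exact_mod_cast h.two_le
      have h3 := log_le_two_sqrt n (by linarith)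
      have h4 : (n:ℝ)^(1/2:ℝ) * (n:ℝ)^(3/2:ℝ) = n^2 := by
        rw [← Real.rpow_add (by linarith)]; norm_num
      have h5 : 0 < (n:ℝ)^(3/2:ℝ) := by positivity
      rw [mul_one_div, div_le_div_iff₀ (by nlinarith) h5]
      calc Real.log n * (n:ℝ)^(3/2:ℝ) ≤ 2 * (n:ℝ)^(1/2:ℝ) * (n:ℝ)^(3/2:ℝ) := by gcongr
        _ = 2 * n^2 := by rw [mul_assoc, h4]
        _ ≤ 4 * (n * (n-1)) := by nlinarith
    · positivity

lemma mertens_one : ∃ C : ℝ, ∀ N : ℕ, 1 ≤ N →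
    |∑ n ∈ Finset.range (N+1), (if n.Prime then Real.log n / n else 0) - Real.log N| ≤ C := by
  set K := ∑' n : ℕ, (if n.Prime then Real.log n / (n * (n - 1)) else (0:ℝ)) with hK
  refine ⟨max (Real.log 4) (1 + K), fun N hN => ?_⟩
  have hN0 : (0:ℝ) < N := by exact_mod_cast hN
  have hb := log_factorial_bounds N hN
  rw [log_factorial_primes] at hb
  rw [← Finset.sum_filter]
  set P := (Finset.range (N+1)).filter Nat.Prime with hP
  have hmem : ∀ p ∈ P, p.Prime ∧ p ≤ N := by
    intro p hp
    rw [hP, Finset.mem_filter, Finset.mem_range] at hp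
    exact ⟨hp.2, by omega⟩
  have hθ : ∑ p ∈ P, Real.log p ≤ Real.log 4 * N := by
    have := Chebyshev.theta_le_log4_mul_x hN0.le
    rw [Chebyshev.theta_eq_sum_primesLE_log] at this
    convert this using 2
    ext p
    simp [hP, Nat.mem_primesLE]
    try omega
  have hK2 : ∑ p ∈ P, Real.log p / (p * (p-1)) ≤ K := by
    rw [hP, Finset.sum_filter]
    apply summable_log_corr.sum_le_tsum
    intro n _
    split_ifs with h
    · have : (2:ℝ) ≤ n := by exact_mod_cast h.two_le
      have := Real.log_nonneg (show (1:ℝ) ≤ n by linarith)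
      apply div_nonneg this
      nlinarith
    · exact le_rfl
  have hup : N * ∑ p ∈ P, Real.log p / p ≤ N * Real.log N + ∑ p ∈ P, Real.log p := by
    refine le_trans ?_ (add_le_add_left hb.2 _)
    rw [Finset.mul_sum, ← Finset.sum_add_distrib]
    apply Finset.sum_le_sum
    intro p hp
    obtain ⟨hpp, hpN⟩ := hmem p hp
    have hp0 : (0:ℝ) < p := by exact_mod_cast hpp.pos
    have hl : 0 ≤ Real.log p := Real.log_natCast_nonneg p
    have h1 : N / p ≤ (N.factorial).factorization p := by
      rw [Nat.factorization_factorial hpp (Nat.lt_add_one (Nat.log p N))]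
      have := Finset.single_le_sum (f := fun i => N / p ^ i) (s := Finset.Ico 1 (Nat.log p N + 1)) (fun i _ => Nat.zero_le _) (a := 1) (by
        rw [Finset.mem_Ico]
        have := Nat.log_pos hpp.one_lt hpN
        omega)
      simpa using this
    have h2 : (N:ℝ)/p ≤ (N.factorial).factorization p + 1 := by
      have := Nat.lt_div_mul_add (a := N) hpp.pos
      rw [div_le_iff₀ hp0]
      have h3 : N ≤ ((N.factorial).factorization p + 1) * p := by nlinarith
      exact_mod_cast h3
    calc N * (Real.log p / p) = N / p * Real.log p := by ring
      _ ≤ ((N.factorial).factorization p + 1) * Real.log p := by gcongr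
      _ = _ := by ring
  have hlo : N * Real.log N - N ≤ N * (∑ p ∈ P, Real.log p / p + ∑ p ∈ P, Real.log p / (p * (p-1))) := by
    refine le_trans hb.1 ?_
    rw [← Finset.sum_add_distrib, Finset.mul_sum]
    apply Finset.sum_le_sum
    intro p hp
    obtain ⟨hpp, hpN⟩ := hmem p hp
    have hp2 : (2:ℝ) ≤ p := by exact_mod_cast hpp.two_le
    have hl : 0 ≤ Real.log p := Real.log_natCast_nonneg p
    have h1 := Nat.factorization_factorial_le_div_pred hpp N
    have h2 : ((N.factorial).factorization p : ℝ) ≤ N / (p - 1) := by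
      have h3 : ((N.factorial).factorization p : ℝ) ≤ ((N / (p-1) : ℕ) : ℝ) := by exact_mod_cast h1
      refine h3.trans (Nat.cast_div_le.trans ?_)
      rw [Nat.cast_sub hpp.one_le]; simp
    have h4 : (0:ℝ) < p - 1 := by linarith
    calc _ ≤ N / (p-1) * Real.log p := by gcongr
      _ = _ := by field_simp; ring
  have h1 : ∑ p ∈ P, Real.log p / p ≤ Real.log N + Real.log 4 := by
    apply le_of_mul_le_mul_left _ hN0
    linarith
  have h2 : Real.log N - 1 ≤ ∑ p ∈ P, Real.log p / p + ∑ p ∈ P, Real.log p / (p * (p-1)) := by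
    apply le_of_mul_le_mul_left _ hN0
    linarith
  rw [abs_le]
  have := le_max_left (Real.log 4) (1 + K)
  have := le_max_right (Real.log 4) (1 + K)
  constructor <;> linarith

/-- `-log (1 - 1/p)` at primes, zero elsewhere. -/
noncomputable def lpr (n : ℕ) : ℝ := if n.Prime then -Real.log (1 - 1 / (n:ℝ)) else 0

/-- Partial sums of `lpr`. -/
noncomputable def lprSum (N : ℕ) : ℝ := ∑ n ∈ Finset.range (N+1), lpr n

lemma neg_log_one_sub_bounds (z : ℝ) (_h0 : 0 ≤ z) (h1 : z ≤ 1/2) :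
    z ≤ -Real.log (1 - z) ∧ -Real.log (1 - z) ≤ z + 2 * z^2 := by
  constructor
  · have := Real.log_le_sub_one_of_pos (show 0 < 1 - z by linarith)
    linarith
  · have := Real.one_sub_inv_le_log_of_pos (show 0 < 1 - z by linarith)
    have h2 : (1 - z)⁻¹ ≤ 1 + z + 2 * z^2 := by
      rw [inv_le_iff_one_le_mul₀ (by linarith)]
      nlinarith [mul_nonneg (sq_nonneg z) (show 0 ≤ 1 - 2 * z by linarith)]
    linarith

lemma lpr_nonneg (n : ℕ) : 0 ≤ lpr n := by
  unfold lpr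
  split_ifs with h
  · have h2 : (2:ℝ) ≤ n := by exact_mod_cast h.two_le
    have : 1 / (n:ℝ) ≤ 1/2 := one_div_le_one_div_of_le (by norm_num) h2
    have h3 : 0 ≤ 1/(n:ℝ) := by positivity
    linarith [(neg_log_one_sub_bounds _ h3 this).1]
  · exact le_rfl

lemma lpr_corr_summable : Summable (fun n : ℕ => lpr n - if n.Prime then 1 / (n:ℝ) else 0) := by
  have : Summable (fun n : ℕ => 2 * (1 / (n:ℝ) ^ 2)) := by
    apply Summable.mul_left
    exact Real.summable_one_div_nat_pow.2 (by norm_num)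
  refine Summable.of_nonneg_of_le ?_ ?_ this
  · intro n
    unfold lpr
    split_ifs with h
    · have h2 : (2:ℝ) ≤ n := by exact_mod_cast h.two_le
      have : 1 / (n:ℝ) ≤ 1/2 := one_div_le_one_div_of_le (by norm_num) h2
      have h3 : 0 ≤ 1/(n:ℝ) := by positivity
      linarith [(neg_log_one_sub_bounds _ h3 this).1]
    · simp
  · intro n
    unfold lpr
    split_ifs with h
    · have h2 : (2:ℝ) ≤ n := by exact_mod_cast h.two_le
      have : 1 / (n:ℝ) ≤ 1/2 := one_div_le_one_div_of_le (by norm_num) h2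
      have h3 : 0 ≤ 1/(n:ℝ) := by positivity
      have := (neg_log_one_sub_bounds _ h3 this).2
      rw [one_div_pow] at this
      linarith
    · simp

lemma mertens_two : ∃ c : ℝ, Tendsto (fun N : ℕ => lprSum N - Real.log (Real.log N)) atTop (nhds c) := by
  obtain ⟨C, hC⟩ := mertens_one
  set w : ℕ → ℝ := fun n => if n.Prime then Real.log n / n else 0 with hw
  set R : ℕ → ℝ := fun N => ∑ n ∈ Finset.range (N+1), w n - Real.log N with hR
  have hlog : ∀ i : ℕ, 0 < Real.log ((i:ℝ)+2) := fun i => Real.log_pos (by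
    have : (0:ℝ) ≤ i := by positivity
    linarith)
  have hlog3 : ∀ i : ℕ, 0 < Real.log ((i:ℝ)+3) := fun i => Real.log_pos (by
    have : (0:ℝ) ≤ i := by positivity
    linarith)
  have hlogle : ∀ i : ℕ, Real.log ((i:ℝ)+2) ≤ Real.log ((i:ℝ)+3) := fun i =>
    Real.log_le_log (by positivity) (by linarith)
  have hlogtend : ∀ a : ℝ, Tendsto (fun i : ℕ => 1 / Real.log ((i:ℝ)+a)) atTop (nhds 0) := by
    intro a
    simp only [one_div]
    apply Tendsto.inv_tendsto_atTop
    apply Real.tendsto_log_atTop.comp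
    exact tendsto_atTop_add_const_right _ _ tendsto_natCast_atTop_atTop
  -- the Dirichlet part
  have h1 : CauchySeq fun n => ∑ i ∈ Finset.range n, (1 / Real.log ((i:ℝ)+3)) • (R (i+3) - R (i+2)) := by
    apply Antitone.cauchySeq_series_mul_of_tendsto_zero_of_bounded (b := 2 * C)
    · intro i j hij
      have : (i:ℝ) ≤ j := by exact_mod_cast hij
      apply one_div_le_one_div_of_le (hlog3 i)
      apply Real.log_le_log (by positivity)
      linarith
    · exact hlogtend 3
    · intro n
      have := Finset.sum_range_sub (fun i => R (i+2)) n
      simp only [show ∀ i, i + 1 + 2 = i + 3 from fun i => rfl] at this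
      rw [this]
      have a1 : |R (n+2)| ≤ C := hC (n+2) (by omega)
      have a2 : |R (0+2)| ≤ C := hC (0+2) (by omega)
      refine (norm_sub_le _ _).trans ?_
      rw [Real.norm_eq_abs, Real.norm_eq_abs]
      linarith
  obtain ⟨l1, hl1⟩ := cauchySeq_tendsto_of_complete h1
  set e : ℕ → ℝ := fun i => (Real.log (Real.log ((i:ℝ)+3)) - Real.log (Real.log ((i:ℝ)+2)))
    - (Real.log ((i:ℝ)+3) - Real.log ((i:ℝ)+2)) / Real.log ((i:ℝ)+3) with he
  have heb : ∀ i, 0 ≤ e i ∧ e i ≤ 1 / Real.log ((i:ℝ)+2) - 1 / Real.log ((i:ℝ)+3) := by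
    intro i
    have u0 := hlog3 i
    have v0 := hlog i
    have hvu := hlogle i
    have hd : Real.log ((i:ℝ)+3) - Real.log ((i:ℝ)+2) ≤ 1 := by
      rw [← Real.log_div (by positivity) (by positivity)]
      have hi : (0:ℝ) ≤ i := by positivity
      have := Real.log_le_sub_one_of_pos (show 0 < ((i:ℝ)+3)/((i:ℝ)+2) by positivity)
      have h2 : ((i:ℝ)+3)/((i:ℝ)+2) ≤ 2 := by
        rw [div_le_iff₀ (by positivity)]; linarith
      linarith
    simp only [he]
    generalize Real.log ((i:ℝ)+3) = u at *
    generalize Real.log ((i:ℝ)+2) = v at *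
    rw [← Real.log_div u0.ne' v0.ne']
    have b1 := Real.log_le_sub_one_of_pos (show 0 < u / v by positivity)
    have b2 := Real.one_sub_inv_le_log_of_pos (show 0 < u / v by positivity)
    constructor
    · have : 1 - (u/v)⁻¹ = (u - v)/u := by field_simp
      linarith
    · have h3 : (u / v - 1) - (u - v)/u = (u-v) * (1/v - 1/u) := by field_simp
      have h4 : 0 ≤ 1/v - 1/u := by
        have := one_div_le_one_div_of_le v0 hvu
        linarith
      have h5 : (u-v) * (1/v - 1/u) ≤ 1 * (1/v - 1/u) := by gcongr
      linarith
  have hes : Summable e := by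
    apply summable_of_sum_range_le (c := 1 / Real.log 2) (fun i => (heb i).1)
    intro n
    calc ∑ i ∈ Finset.range n, e i ≤ ∑ i ∈ Finset.range n, (1 / Real.log ((i:ℝ)+2) - 1 / Real.log ((i:ℝ)+3)) :=
          Finset.sum_le_sum fun i _ => (heb i).2
      _ = 1 / Real.log 2 - 1 / Real.log ((n:ℝ)+2) := by
          have := Finset.sum_range_sub' (fun i : ℕ => 1 / Real.log ((i:ℝ)+2)) n
          rw [Nat.cast_zero, zero_add] at this
          rw [← this]
          apply Finset.sum_congr rfl
          intro i _
          push_cast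
          ring_nf
      _ ≤ _ := by
          have := (one_div_pos.2 (hlog n)).le
          linarith
  have hl2 := hes.hasSum.tendsto_sum_nat
  have hl3 := ((summable_nat_add_iff 3).2 lpr_corr_summable).hasSum.tendsto_sum_nat
  have hfin := (((hl1.sub hl2).add hl3).add_const (∑ n ∈ Finset.range 3, lpr n - Real.log (Real.log 2)))
  refine ⟨_, (tendsto_add_atTop_iff_nat 2).1 (hfin.congr ?_)⟩
  intro n
  have hA : lprSum (n+2) = ∑ i ∈ Finset.range 3, lpr i + ∑ i ∈ Finset.range n, lpr (i+3) := by
    unfold lprSum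
    rw [show n + 2 + 1 = 3 + n by ring, Finset.sum_range_add]
    congr 1
    apply Finset.sum_congr rfl
    intro i _
    rw [add_comm]
  have hLL : Real.log (Real.log ((n:ℝ)+2)) - Real.log (Real.log 2) =
      ∑ i ∈ Finset.range n, (Real.log (Real.log ((i:ℝ)+3)) - Real.log (Real.log ((i:ℝ)+2))) := by
    have := Finset.sum_range_sub (fun i : ℕ => Real.log (Real.log ((i:ℝ)+2))) n
    rw [Nat.cast_zero, zero_add] at this
    rw [← this]
    apply Finset.sum_congr rfl
    intro i _
    push_cast
    ring_nf
  have key : ∀ i : ℕ, (1 / Real.log ((i:ℝ)+3)) • (R (i+3) - R (i+2)) - e i +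
      (lpr (i+3) - if (i+3).Prime then 1 / ((i+3 : ℕ):ℝ) else 0) =
      lpr (i+3) - (Real.log (Real.log ((i:ℝ)+3)) - Real.log (Real.log ((i:ℝ)+2))) := by
    intro i
    have : R (i+3) - R (i+2) = w (i+3) - (Real.log ((i:ℝ)+3) - Real.log ((i:ℝ)+2)) := by
      simp only [hR]
      rw [Finset.sum_range_succ _ (i+3)]
      push_cast
      ring
    rw [this]
    have u0 := hlog3 i
    simp only [he, hw, smul_eq_mul]
    split_ifs with h
    · push_cast
      field_simp
      ring
    · push_cast
      field_simp
      ring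
  have hcast : ((n + 2 : ℕ) : ℝ) = n + 2 := by push_cast; rfl
  rw [hA, hcast]
  have hs := Finset.sum_congr (rfl : Finset.range n = Finset.range n) (fun i _ => key i)
  clear_value e R w
  simp only [Finset.sum_add_distrib, Finset.sum_sub_distrib] at hs hLL ⊢
  linarith

/-- The Euler factor logarithms at `1 + s`. -/
noncomputable def qz (s : ℝ) (n : ℕ) : ℝ :=
  if n.Prime then -Real.log (1 - (n:ℝ) ^ (-(1+s))) else 0

lemma rpow_prime_le (s : ℝ) (hs : 0 ≤ s) (n : ℕ) (hn : 2 ≤ n) :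
    0 ≤ (n:ℝ) ^ (-(1+s)) ∧ (n:ℝ) ^ (-(1+s)) ≤ 1 / n ∧ 1 / (n:ℝ) ≤ 1/2 := by
  have h2 : (2:ℝ) ≤ n := by exact_mod_cast hn
  refine ⟨by positivity, ?_, one_div_le_one_div_of_le (by norm_num) h2⟩
  rw [one_div, ← Real.rpow_neg_one]
  apply Real.rpow_le_rpow_of_exponent_le <;> linarith

lemma summable_qz (s : ℝ) (hs : 0 < s) : Summable (qz s) := by
  have : Summable (fun n : ℕ => 2 * (n:ℝ) ^ (-(1+s))) := by
    apply Summable.mul_left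
    exact Real.summable_nat_rpow.2 (by linarith)
  refine Summable.of_nonneg_of_le ?_ ?_ this
  · intro n
    unfold qz
    split_ifs with h
    · obtain ⟨h1, h2, h3⟩ := rpow_prime_le s hs.le n h.two_le
      linarith [(neg_log_one_sub_bounds _ h1 (h2.trans h3)).1]
    · exact le_rfl
  · intro n
    unfold qz
    split_ifs with h
    · obtain ⟨h1, h2, h3⟩ := rpow_prime_le s hs.le n h.two_le
      have := (neg_log_one_sub_bounds _ h1 (h2.trans h3)).2
      nlinarith
    · positivity

lemma exp_qz (s : ℝ) (hs : 0 < s) : Real.exp (∑' n, qz s n) = ‖riemannZeta (1 + s)‖ := by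
  have h := riemannZeta_eulerProduct_exp_log (s := 1 + s) (by simp [hs])
  rw [← h]
  have h2 : (∑' p : Nat.Primes, -Complex.log (1 - (p:ℂ) ^ (-(1 + s : ℂ)))) = ((∑' n, qz s n : ℝ) : ℂ) := by
    have h3 : ∑' n, qz s n = ∑' p : Nat.Primes, -Real.log (1 - ((p:ℕ):ℝ) ^ (-(1+s))) :=
      (Nat.Primes.tsum_eq_tsum_ite (f := fun n : ℕ => -Real.log (1 - (n:ℝ) ^ (-(1+s))))).symm
    rw [h3, Complex.ofReal_tsum]
    apply tsum_congr
    intro p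
    obtain ⟨h1, h2, h3⟩ := rpow_prime_le s hs.le p p.2.two_le
    rw [Complex.ofReal_neg, Complex.ofReal_log (by linarith)]
    push_cast
    rw [Complex.ofReal_cpow (by positivity)]
    push_cast
    rfl
  rw [h2, ← Complex.ofReal_exp, Complex.norm_real, Real.norm_of_nonneg (Real.exp_nonneg _)]

lemma tendsto_qz : Tendsto (fun s : ℝ => ∑' n, qz s n + Real.log s) (nhdsWithin 0 (Set.Ioi 0)) (nhds 0) := by
  have h1 : Tendsto (fun s : ℝ => (1 + s : ℂ)) (nhdsWithin 0 (Set.Ioi 0)) (nhdsWithin 1 {1}ᶜ) := by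
    apply tendsto_nhdsWithin_of_tendsto_nhds_of_eventually_within
    · have : Tendsto (fun s : ℝ => (1 + s : ℂ)) (nhds 0) (nhds (1 + (0:ℝ))) := by
        apply Continuous.tendsto
        fun_prop
      simp only [Complex.ofReal_zero, add_zero] at this
      exact this.mono_left nhdsWithin_le_nhds
    · filter_upwards [self_mem_nhdsWithin] with s hs
      have : (s:ℝ) ≠ 0 := ne_of_gt hs
      simpa using this
  have h2 := (riemannZeta_residue_one.comp h1).norm
  have h3 : Tendsto (fun s : ℝ => s * Real.exp (∑' n, qz s n)) (nhdsWithin 0 (Set.Ioi 0)) (nhds 1) := by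
    rw [norm_one] at h2
    refine h2.congr' ?_
    filter_upwards [self_mem_nhdsWithin] with s hs
    have hs : 0 < s := hs
    rw [exp_qz s hs]
    simp [abs_of_pos hs]
  have h4 := h3.log one_ne_zero
  rw [Real.log_one] at h4
  refine h4.congr' ?_
  filter_upwards [self_mem_nhdsWithin] with s hs
  have hs : 0 < s := hs
  rw [Real.log_mul hs.ne' (Real.exp_ne_zero _), Real.log_exp]
  ring

lemma lpr_qz_bound (s : ℝ) (hs : 0 < s) (n : ℕ) :
    ‖lpr n * Real.exp (-(s * Real.log n)) - qz s n‖ ≤ 2 * (1 / (n:ℝ)^2) := by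
  unfold lpr qz
  split_ifs with h
  · have hn : (2:ℝ) ≤ n := by exact_mod_cast h.two_le
    have hr : (n:ℝ) ^ (-(1+s)) = 1 / n * Real.exp (-(s * Real.log n)) := by
      rw [Real.rpow_def_of_pos (by linarith), show Real.log n * -(1+s) = -Real.log n + -(s * Real.log n) by ring,
        Real.exp_add, Real.exp_neg, Real.exp_log (by linarith), one_div]
    obtain ⟨h1, h2, h3⟩ := rpow_prime_le s hs.le n h.two_le
    rw [hr] at *
    have hy0 : 0 ≤ Real.exp (-(s * Real.log n)) := (Real.exp_pos _).le
    have hy1 : Real.exp (-(s * Real.log n)) ≤ 1 := by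
      rw [Real.exp_le_one_iff]
      have := mul_nonneg hs.le (Real.log_natCast_nonneg n)
      linarith
    rw [← one_div_pow]
    have hx0 : 0 ≤ 1 / (n:ℝ) := by positivity
    generalize Real.exp (-(s * Real.log n)) = y at *
    generalize 1 / (n:ℝ) = x at *
    obtain ⟨a1, a2⟩ := neg_log_one_sub_bounds x hx0 h3
    obtain ⟨b1, b2⟩ := neg_log_one_sub_bounds (x*y) h1 (h2.trans h3)
    generalize -Real.log (1 - x) = A at *
    generalize -Real.log (1 - x * y) = B at *
    rw [Real.norm_eq_abs, abs_le]
    have c1 : (x*y)^2 ≤ x^2 := by gcongr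
    have c2 : x * y ≤ A * y := by gcongr
    have c3 : A * y ≤ (x + 2 * x^2) * y := by gcongr
    have c4 : x^2 * y ≤ x^2 * 1 := by gcongr
    constructor <;> nlinarith
  · simp

lemma summable_lpr_exp (s : ℝ) (hs : 0 < s) : Summable (fun n => lpr n * Real.exp (-(s * Real.log n))) := by
  have h0 : Summable (fun n : ℕ => 2 * (1 / (n:ℝ) ^ 2)) := by
    apply Summable.mul_left
    exact Real.summable_one_div_nat_pow.2 (by norm_num)
  have := (Summable.of_norm_bounded h0 (lpr_qz_bound s hs)).add (summable_qz s hs)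
  simpa using this

lemma tendsto_lpr_exp : Tendsto (fun s : ℝ => ∑' n, lpr n * Real.exp (-(s * Real.log n)) + Real.log s)
    (nhdsWithin 0 (Set.Ioi 0)) (nhds 0) := by
  have h0 : Summable (fun n : ℕ => 2 * (1 / (n:ℝ) ^ 2)) := by
    apply Summable.mul_left
    exact Real.summable_one_div_nat_pow.2 (by norm_num)
  have h1 : Tendsto (fun s : ℝ => ∑' n, (lpr n * Real.exp (-(s * Real.log n)) - qz s n))
      (nhdsWithin 0 (Set.Ioi 0)) (nhds (∑' n : ℕ, (0:ℝ))) := by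
    apply tendsto_tsum_of_dominated_convergence h0
    · intro n
      apply Tendsto.mono_left _ nhdsWithin_le_nhds
      unfold lpr qz
      split_ifs with h
      · have hn : (2:ℝ) ≤ n := by exact_mod_cast h.two_le
        have hn' : 1 / (n:ℝ) ≤ 1/2 := one_div_le_one_div_of_le (by norm_num) hn
        have e1 : Tendsto (fun s : ℝ => Real.exp (-(s * Real.log n))) (nhds 0) (nhds 1) := by
          have : Continuous (fun s : ℝ => Real.exp (-(s * Real.log n))) := by fun_prop
          simpa using this.tendsto 0
        have e2 : Tendsto (fun s : ℝ => (n:ℝ)^(-(1+s))) (nhds 0) (nhds (1/n)) := by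
          have : Continuous (fun s : ℝ => (n:ℝ)^(-(1+s))) := by
            apply Continuous.rpow continuous_const (by fun_prop)
            intro s; left; linarith
          have := this.tendsto 0
          simpa [Real.rpow_neg_one] using this
        have e3 := (e2.const_sub 1).log (by linarith)
        have := (e1.const_mul (-Real.log (1 - 1/(n:ℝ)))).sub e3.neg
        simpa using this
      · simp
    · filter_upwards [self_mem_nhdsWithin] with s hs n
      exact lpr_qz_bound s hs n
  rw [tsum_zero] at h1
  have h2 := h1.add tendsto_qz
  rw [add_zero] at h2
  refine h2.congr' ?_
  filter_upwards [self_mem_nhdsWithin] with s hs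
  rw [(summable_lpr_exp s hs).tsum_sub (summable_qz s hs)]
  ring

lemma hasSum_harm (s : ℝ) (hs : 0 < s) :
    HasSum (fun n : ℕ => 1 / (n:ℝ) * Real.exp (-(s * n))) (-Real.log (1 - Real.exp (-s))) := by
  have h1 : Real.exp (-s) < 1 := by rw [Real.exp_lt_one_iff]; linarith
  have h := Real.hasSum_pow_div_log_of_abs_lt_one (x := Real.exp (-s))
    (by rw [abs_of_pos (Real.exp_pos _)]; exact h1)
  rw [← hasSum_nat_add_iff' 1]
  simp only [Finset.sum_range_one, Nat.cast_zero, div_zero, zero_mul, sub_zero]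
  refine (congrArg (fun f => HasSum f (-Real.log (1 - Real.exp (-s)))) (funext fun n => ?_)).mpr h
  rw [← Real.exp_nat_mul]
  push_cast
  rw [show -(s * ((n:ℝ)+1)) = ((n:ℝ)+1) * -s by ring]
  ring

lemma tendsto_harm : Tendsto (fun s : ℝ => -Real.log (1 - Real.exp (-s)) + Real.log s)
    (nhdsWithin 0 (Set.Ioi 0)) (nhds 0) := by
  have hd : HasDerivAt (fun s : ℝ => 1 - Real.exp (-s)) 1 0 := by
    have := ((hasDerivAt_id (0:ℝ)).neg.exp).const_sub 1
    simpa using this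
  have h1 := hd.tendsto_slope_zero_right
  have h2 := (h1.log one_ne_zero).neg
  simp only [zero_add, Real.log_one, neg_zero, Real.exp_zero, sub_self, sub_zero, smul_eq_mul] at h2
  refine h2.congr' ?_
  filter_upwards [self_mem_nhdsWithin] with s hs
  have hs : 0 < s := hs
  have h1 : Real.exp (-s) < 1 := by rw [Real.exp_lt_one_iff]; linarith
  rw [Real.log_mul (by positivity) (by linarith), Real.log_inv]
  ring

lemma integral_step (c l s : ℝ) (hl : 0 ≤ l) (hs : 0 < s) :
    MeasureTheory.IntegrableOn (fun u : ℝ => Real.exp (-u) * (if l ≤ u / s then c else 0)) (Set.Ioi 0) ∧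
    ∫ u in Set.Ioi (0:ℝ), Real.exp (-u) * (if l ≤ u / s then c else 0) = c * Real.exp (-(s * l)) := by
  have hfun : (fun u : ℝ => Real.exp (-u) * (if l ≤ u / s then c else 0)) =
      (Set.Ici (s * l)).indicator (fun u => Real.exp (-u) * c) := by
    funext u
    by_cases h : l ≤ u / s
    · have h' : s * l ≤ u := by rw [le_div_iff₀ hs] at h; linarith
      simp [h, h']
    · have h' : ¬ s * l ≤ u := by rw [le_div_iff₀ hs] at h; intro h2; apply h; linarith
      simp [h, h']
  rw [hfun]
  have hi : MeasureTheory.IntegrableOn (fun u : ℝ => Real.exp (-u) * c) (Set.Ioi 0) :=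
    (integrableOn_exp_neg_Ioi 0).mul_const c
  refine ⟨hi.indicator measurableSet_Ici, ?_⟩
  rw [MeasureTheory.setIntegral_indicator measurableSet_Ici]
  have hset : (Set.Ioi (0:ℝ) ∩ Set.Ici (s*l) : Set ℝ) =ᵐ[MeasureTheory.volume] Set.Ioi (s*l) := by
    have h1 : (Set.Ioi (0:ℝ) ∩ Set.Ici (s*l) : Set ℝ) =ᵐ[MeasureTheory.volume] (Set.Ioi (0:ℝ) ∩ Set.Ioi (s*l) : Set ℝ) :=
      EventuallyEq.rfl.inter MeasureTheory.Ioi_ae_eq_Ici.symm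
    rwa [Set.Ioi_inter_Ioi, max_eq_right (by positivity)] at h1
  rw [MeasureTheory.setIntegral_congr_set hset, MeasureTheory.integral_mul_const, integral_exp_neg_Ioi, mul_comm]

/-- Difference of the two counting functions, on the logarithmic scale. -/
noncomputable def Gd (t : ℝ) : ℝ := lprSum ⌊Real.exp t⌋₊ - (harmonic ⌊t⌋₊ : ℝ)

lemma harmonic_real (n : ℕ) : (harmonic n : ℝ) = ∑ i ∈ Finset.range (n+1), 1 / (i:ℝ) := by
  rw [Finset.sum_range_succ', harmonic]
  push_cast
  simp

lemma hasSum_Gd (t : ℝ) (ht : 0 ≤ t) :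
    HasSum (fun n : ℕ => (if Real.log n ≤ t then lpr n else 0) - (if (n:ℝ) ≤ t then 1 / (n:ℝ) else 0)) (Gd t) := by
  unfold Gd
  apply HasSum.sub
  · have h := hasSum_sum_of_ne_finset_zero (L := .unconditional ℕ) (f := fun n : ℕ => (if Real.log n ≤ t then lpr n else 0))
      (s := Finset.range (⌊Real.exp t⌋₊+1)) (by
        intro n hn
        rw [Finset.mem_range, not_lt] at hn
        have h1 := (Nat.floor_lt (Real.exp_pos t).le).1 (Nat.lt_of_succ_le hn)
        have h2 := (Real.lt_log_iff_exp_lt ((Real.exp_pos t).trans h1)).2 h1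
        simp [not_le.2 h2])
    refine (congrArg (fun x => HasSum (fun n : ℕ => (if Real.log n ≤ t then lpr n else 0)) x) ?_).mpr h
    unfold lprSum
    apply Finset.sum_congr rfl
    intro n hn
    rcases Nat.eq_zero_or_pos n with h0 | h0
    · simp [h0, ht]
    · rw [Finset.mem_range] at hn
      have h1 : (n:ℝ) ≤ Real.exp t := (Nat.le_floor_iff (Real.exp_pos t).le).1 (by omega)
      have h2 : Real.log n ≤ t := (Real.log_le_iff_le_exp (by exact_mod_cast h0)).2 h1
      simp [h2]
  · have h := hasSum_sum_of_ne_finset_zero (L := .unconditional ℕ) (f := fun n : ℕ => (if (n:ℝ) ≤ t then 1 / (n:ℝ) else 0))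
      (s := Finset.range (⌊t⌋₊+1)) (by
        intro n hn
        rw [Finset.mem_range, not_lt] at hn
        have h1 := (Nat.floor_lt ht).1 (Nat.lt_of_succ_le hn)
        simp [not_le.2 h1])
    refine (congrArg (fun x => HasSum (fun n : ℕ => (if (n:ℝ) ≤ t then 1 / (n:ℝ) else 0)) x) ?_).mpr h
    rw [harmonic_real]
    apply Finset.sum_congr rfl
    intro n hn
    rw [Finset.mem_range] at hn
    have h1 : (n:ℝ) ≤ t := (Nat.le_floor_iff ht).1 (by omega)
    simp [h1]

lemma laplace_Gd (s : ℝ) (hs : 0 < s) :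
    ∫ u in Set.Ioi (0:ℝ), Real.exp (-u) * Gd (u / s) =
      ∑' n, lpr n * Real.exp (-(s * Real.log n)) + Real.log (1 - Real.exp (-s)) := by
  set F1 : ℕ → ℝ → ℝ := fun n u => Real.exp (-u) * (if Real.log n ≤ u / s then lpr n else 0) with hF1
  set F2 : ℕ → ℝ → ℝ := fun n u => Real.exp (-u) * (if (n:ℝ) ≤ u / s then 1 / (n:ℝ) else 0) with hF2
  have i1 := fun n : ℕ => integral_step (lpr n) (Real.log n) s (Real.log_natCast_nonneg n) hs
  have i2 := fun n : ℕ => integral_step (1 / (n:ℝ)) n s (Nat.cast_nonneg n) hs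
  have hsumm := (summable_lpr_exp s hs).add (hasSum_harm s hs).summable
  have key := MeasureTheory.hasSum_integral_of_summable_integral_norm
    (μ := MeasureTheory.volume.restrict (Set.Ioi (0:ℝ))) (F := fun n u => F1 n u - F2 n u)
    (fun n => (i1 n).1.sub (i2 n).1) (by
      refine Summable.of_nonneg_of_le (fun n => MeasureTheory.integral_nonneg fun u => norm_nonneg _) (fun n => ?_) hsumm
      rw [← (i1 n).2, ← (i2 n).2, ← MeasureTheory.integral_add (i1 n).1 (i2 n).1]
      apply MeasureTheory.integral_mono ((i1 n).1.sub (i2 n).1).norm ((i1 n).1.add (i2 n).1)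
      intro u
      refine (norm_sub_le _ _).trans (le_of_eq ?_)
      have hh : 0 ≤ Real.exp (-u) := (Real.exp_pos _).le
      have hl := lpr_nonneg n
      simp only [Pi.add_apply]
      rw [Real.norm_of_nonneg, Real.norm_of_nonneg]
      · apply mul_nonneg hh; split_ifs <;> positivity
      · apply mul_nonneg hh; split_ifs <;> first | exact hl | exact le_rfl)
  have e1 : ∫ u in Set.Ioi (0:ℝ), ∑' n, (F1 n u - F2 n u) = ∫ u in Set.Ioi (0:ℝ), Real.exp (-u) * Gd (u / s) := by
    apply MeasureTheory.setIntegral_congr_fun measurableSet_Ioi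
    intro u hu
    have hu : 0 < u := hu
    have := (hasSum_Gd (u/s) (by positivity)).mul_left (Real.exp (-u))
    simp only [mul_sub] at this
    exact this.tsum_eq
  have e2 : ∀ n : ℕ, ∫ u in Set.Ioi (0:ℝ), (F1 n u - F2 n u) =
      lpr n * Real.exp (-(s * Real.log n)) - 1 / (n:ℝ) * Real.exp (-(s * n)) := by
    intro n
    rw [MeasureTheory.integral_sub (i1 n).1 (i2 n).1, (i1 n).2, (i2 n).2]
  rw [← e1, ← key.tsum_eq]
  simp_rw [e2]
  rw [(summable_lpr_exp s hs).tsum_sub (hasSum_harm s hs).summable, (hasSum_harm s hs).tsum_eq]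
  ring

lemma tendsto_log_floor : Tendsto (fun t : ℝ => Real.log (⌊t⌋₊ : ℝ) - Real.log t) atTop (nhds 0) := by
  have h := (tendsto_nat_floor_div_atTop (R := ℝ)).log one_ne_zero
  rw [Real.log_one] at h
  refine h.congr' ?_
  filter_upwards [eventually_ge_atTop 1] with t ht
  have : 0 < ⌊t⌋₊ := Nat.floor_pos.2 ht
  rw [Real.log_div (by positivity) (by linarith)]

lemma tendsto_log_log_floor_exp :
    Tendsto (fun t : ℝ => Real.log (Real.log (⌊Real.exp t⌋₊ : ℝ)) - Real.log t) atTop (nhds 0) := by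
  have h := tendsto_log_floor.comp Real.tendsto_exp_atTop
  simp only [Function.comp_def, Real.log_exp] at h
  have h2 : Tendsto (fun t : ℝ => Real.log (⌊Real.exp t⌋₊ : ℝ) / t) atTop (nhds 1) := by
    have h3 := (h.mul tendsto_inv_atTop_zero).add_const 1
    simp only [zero_mul, zero_add] at h3
    refine h3.congr' ?_
    filter_upwards [eventually_gt_atTop 0] with t ht
    field_simp
    ring
  have h4 := h2.log one_ne_zero
  rw [Real.log_one] at h4
  refine h4.congr' ?_
  filter_upwards [eventually_ge_atTop 1, h2.eventually (lt_mem_nhds (show (0:ℝ) < 1 by norm_num))] with t ht h5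
  have h6 : Real.log (⌊Real.exp t⌋₊ : ℝ) ≠ 0 := by
    intro h7
    rw [h7] at h5
    simp at h5
  rw [Real.log_div h6 (by linarith)]

lemma tendsto_Gd (c : ℝ) (hc : Tendsto (fun N : ℕ => lprSum N - Real.log (Real.log N)) atTop (nhds c)) :
    Tendsto Gd atTop (nhds (c - Real.eulerMascheroniConstant)) := by
  have h1 := hc.comp ((tendsto_nat_floor_atTop (α := ℝ)).comp Real.tendsto_exp_atTop)
  have h2 := Real.tendsto_harmonic_sub_log.comp (tendsto_nat_floor_atTop (α := ℝ))
  have h3 := ((h1.sub h2).add tendsto_log_log_floor_exp).sub tendsto_log_floor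
  simp only [add_zero, sub_zero] at h3
  refine h3.congr fun t => ?_
  simp only [Function.comp_def, Gd]
  ring

lemma lprSum_mono : Monotone lprSum := by
  intro a b hab
  apply Finset.sum_le_sum_of_subset_of_nonneg
  · intro x; simp only [Finset.mem_range]; omega
  · intro i _ _; exact lpr_nonneg i

lemma lprSum_nonneg (n : ℕ) : 0 ≤ lprSum n := Finset.sum_nonneg fun i _ => lpr_nonneg i

lemma bounded_Gd (d : ℝ) (h : Tendsto Gd atTop (nhds d)) : ∃ K, ∀ t, ‖Gd t‖ ≤ K := by
  have h1 := h.norm.eventually (gt_mem_nhds (show ‖d‖ < ‖d‖ + 1 by linarith))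
  obtain ⟨T, hT⟩ := eventually_atTop.1 h1
  have hmono : Monotone (fun n : ℕ => (harmonic n : ℝ)) := by
    apply monotone_nat_of_le_succ
    intro n
    rw [harmonic_succ]
    push_cast
    have : (0:ℝ) ≤ ((n:ℝ)+1)⁻¹ := by positivity
    linarith
  have hnn : ∀ n : ℕ, (0:ℝ) ≤ (harmonic n : ℝ) := by
    intro n
    have := hmono (Nat.zero_le n)
    simpa using this
  refine ⟨max (‖d‖+1) (lprSum ⌊Real.exp T⌋₊ + harmonic ⌊T⌋₊), fun t => ?_⟩
  rcases le_total T t with htT | htT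
  · exact (hT t htT).le.trans (le_max_left _ _)
  · refine le_trans ?_ (le_max_right _ _)
    refine (norm_sub_le _ _).trans ?_
    rw [Real.norm_of_nonneg (lprSum_nonneg _), Real.norm_of_nonneg (hnn _)]
    apply add_le_add
    · apply lprSum_mono
      exact Nat.floor_mono (Real.exp_le_exp.2 htT)
    · exact hmono (Nat.floor_mono htT)

lemma measurable_Gd : Measurable Gd := by
  unfold Gd
  apply Measurable.sub
  · exact (measurable_from_nat (f := lprSum)).comp (Nat.measurable_floor.comp Real.measurable_exp)
  · exact (measurable_from_nat (f := fun n => (harmonic n : ℝ))).comp Nat.measurable_floor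

lemma mertens_log : Tendsto (fun N : ℕ => lprSum N - Real.log (Real.log N)) atTop
    (nhds Real.eulerMascheroniConstant) := by
  obtain ⟨c, hc⟩ := mertens_two
  have hG := tendsto_Gd c hc
  set d := c - Real.eulerMascheroniConstant with hd
  obtain ⟨K, hK⟩ := bounded_Gd d hG
  have h1 : Tendsto (fun s : ℝ => ∫ u in Set.Ioi (0:ℝ), Real.exp (-u) * Gd (u / s))
      (nhdsWithin 0 (Set.Ioi 0)) (nhds (∫ u in Set.Ioi (0:ℝ), Real.exp (-u) * d)) := by
    apply MeasureTheory.tendsto_integral_filter_of_dominated_convergence (fun u => Real.exp (-u) * K)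
    · refine Eventually.of_forall fun s => ?_
      apply Measurable.aestronglyMeasurable
      apply Measurable.mul (by fun_prop)
      exact measurable_Gd.comp (by fun_prop)
    · refine Eventually.of_forall fun s => Eventually.of_forall fun u => ?_
      rw [norm_mul, Real.norm_of_nonneg (Real.exp_pos _).le]
      exact mul_le_mul_of_nonneg_left (hK _) (Real.exp_pos _).le
    · exact (integrableOn_exp_neg_Ioi 0).mul_const K
    · rw [MeasureTheory.ae_restrict_iff' measurableSet_Ioi]
      refine Eventually.of_forall fun u hu => ?_
      apply Tendsto.const_mul
      apply hG.comp
      exact (tendsto_inv_nhdsGT_zero.const_mul_atTop hu).congr fun s => (div_eq_mul_inv u s).symm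
  rw [MeasureTheory.integral_mul_const, integral_exp_neg_Ioi_zero, one_mul] at h1
  have h2 := tendsto_lpr_exp.sub tendsto_harm
  rw [sub_zero] at h2
  have h3 : d = 0 := by
    refine tendsto_nhds_unique h1 (h2.congr' ?_)
    filter_upwards [self_mem_nhdsWithin] with s hs
    rw [laplace_Gd s hs]
    ring
  have h4 : c = Real.eulerMascheroniConstant := by linarith
  rwa [h4] at hc

lemma mertens_three : Tendsto (fun N : ℕ => Real.exp (-lprSum N) * Real.log N) atTop
    (nhds (Real.exp (-Real.eulerMascheroniConstant))) := by
  have h := (Real.continuous_exp.tendsto _).comp mertens_log.neg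
  refine h.congr' ?_
  filter_upwards [eventually_ge_atTop 2] with N hN
  have hN' : (2:ℝ) ≤ N := by exact_mod_cast hN
  have hl : 0 < Real.log N := Real.log_pos (by linarith)
  simp only [Function.comp_def]
  rw [neg_sub, sub_eq_add_neg, Real.exp_add, Real.exp_log hl, mul_comm]

lemma totient_exp (n : ℕ) (hn : n ≠ 0) :
    (n.totient : ℝ) / n = Real.exp (-∑ p ∈ n.primeFactors, lpr p) := by
  have h := Nat.totient_eq_mul_prod_factors n
  have h2 : (n.totient : ℝ) = n * ∏ p ∈ n.primeFactors, (1 - (p:ℝ)⁻¹) := by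
    have := congrArg (fun q : ℚ => (q:ℝ)) h
    push_cast at this
    exact this
  have hn' : (n:ℝ) ≠ 0 := by exact_mod_cast hn
  rw [h2, mul_div_cancel_left₀ _ hn', ← Finset.sum_neg_distrib, Real.exp_sum]
  apply Finset.prod_congr rfl
  intro p hp
  have hpp := Nat.prime_of_mem_primeFactors hp
  have h2 : (2:ℝ) ≤ p := by exact_mod_cast hpp.two_le
  have : 1 / (p:ℝ) ≤ 1/2 := one_div_le_one_div_of_le (by norm_num) h2
  rw [lpr, if_pos hpp, neg_neg, Real.exp_log (by linarith), one_div]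

lemma lprSum_eq_filter (N : ℕ) : lprSum N = ∑ p ∈ (Finset.range (N+1)).filter Nat.Prime, lpr p := by
  rw [lprSum, Finset.sum_filter]
  apply Finset.sum_congr rfl
  intro n _
  split_ifs with h
  · rfl
  · rw [lpr, if_neg h]

lemma totient_lower (a : ℝ) (ha : a < Real.exp (-Real.eulerMascheroniConstant)) :
    ∀ᶠ n : ℕ in atTop, a ≤ (n.totient : ℝ) / n * Real.log (Real.log n) := by
  have hlog : Tendsto (fun n : ℕ => Real.log n) atTop atTop :=
    Real.tendsto_log_atTop.comp tendsto_natCast_atTop_atTop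
  have h1 := mertens_three.comp ((tendsto_nat_floor_atTop (α := ℝ)).comp hlog)
  have h2 : Tendsto (fun n : ℕ => Real.exp (-(2 / Real.log (Real.log n)))) atTop (nhds 1) := by
    have h3 : Tendsto (fun n : ℕ => -(2 / Real.log (Real.log n))) atTop (nhds 0) := by
      have := (tendsto_const_nhds (x := (2:ℝ))).div_atTop (Real.tendsto_log_atTop.comp hlog)
      simpa using this.neg
    simpa [Function.comp_def] using (Real.continuous_exp.tendsto _).comp h3
  have h3 := h1.mul h2
  rw [mul_one] at h3
  filter_upwards [h3.eventually (lt_mem_nhds ha), eventually_ge_atTop 1, hlog.eventually_ge_atTop 3] with n hn hn1 hlog3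
  refine hn.le.trans ?_
  simp only [Function.comp_def]
  rw [totient_exp n (by omega)]
  set y := Real.log n with hy
  have hly : 0 < Real.log y := Real.log_pos (by linarith)
  have hfl : 3 ≤ ⌊y⌋₊ := Nat.le_floor (by exact_mod_cast hlog3)
  have hfl' : (3:ℝ) ≤ ⌊y⌋₊ := by exact_mod_cast hfl
  have hle : Real.log (⌊y⌋₊:ℝ) ≤ Real.log y := Real.log_le_log (by linarith) (Nat.floor_le (by linarith))
  have hsum : ∑ p ∈ n.primeFactors, lpr p ≤ lprSum ⌊y⌋₊ + 2 / Real.log y := by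
    rw [← Finset.sum_filter_add_sum_filter_not n.primeFactors (fun p => p ≤ ⌊y⌋₊)]
    apply add_le_add
    · rw [lprSum]
      apply Finset.sum_le_sum_of_subset_of_nonneg
      · intro p hp
        rw [Finset.mem_filter] at hp
        rw [Finset.mem_range]
        omega
      · intro i _ _; exact lpr_nonneg i
    · set B := n.primeFactors.filter (fun p => ¬ p ≤ ⌊y⌋₊) with hB
      have hBm : ∀ p ∈ B, p.Prime ∧ y < p := by
        intro p hp
        rw [hB, Finset.mem_filter] at hp
        refine ⟨Nat.prime_of_mem_primeFactors hp.1, ?_⟩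
        exact (Nat.floor_lt (by linarith)).1 (not_le.1 hp.2)
      have hcard : (B.card : ℝ) * Real.log y ≤ y := by
        have e1 : (∏ p ∈ B, p) ∣ n :=
          (Finset.prod_dvd_prod_of_subset _ _ _ (Finset.filter_subset _ _)).trans (Nat.prod_primeFactors_dvd n)
        have e2 : (∏ p ∈ B, (p:ℝ)) ≤ n := by
          rw [← Nat.cast_prod]; exact_mod_cast Nat.le_of_dvd (by omega) e1
        have e3 : y ^ B.card ≤ ∏ p ∈ B, (p:ℝ) := by
          rw [← Finset.prod_const]
          apply Finset.prod_le_prod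
          · intro i _; linarith
          · intro i hi; exact (hBm i hi).2.le
        have e4 := Real.log_le_log (by positivity) (e3.trans e2)
        rwa [Real.log_pow] at e4
      calc ∑ p ∈ B, lpr p ≤ ∑ p ∈ B, 2 / y := by
            apply Finset.sum_le_sum
            intro p hp
            obtain ⟨hpp, hyp⟩ := hBm p hp
            have h2 : (2:ℝ) ≤ p := by exact_mod_cast hpp.two_le
            have h3 : 1 / (p:ℝ) ≤ 1/2 := one_div_le_one_div_of_le (by norm_num) h2
            have h4 : 0 ≤ 1/(p:ℝ) := by positivity
            have h5 := (neg_log_one_sub_bounds _ h4 h3).2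
            have h6 : 1/(p:ℝ) ≤ 1 / y := one_div_le_one_div_of_le (by linarith) hyp.le
            rw [lpr, if_pos hpp]
            have h7 : 2 / y = 2 * (1/y) := by ring
            rw [h7]
            nlinarith
        _ = B.card * (2 / y) := by rw [Finset.sum_const, nsmul_eq_mul]
        _ ≤ 2 / Real.log y := by
            rw [le_div_iff₀ hly]
            calc B.card * (2 / y) * Real.log y = (B.card * Real.log y) * (2 / y) := by ring
              _ ≤ y * (2 / y) := by gcongr
              _ = 2 := by field_simp
  calc Real.exp (-lprSum ⌊y⌋₊) * Real.log (⌊y⌋₊:ℝ) * Real.exp (-(2 / Real.log y))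
      = Real.exp (-(lprSum ⌊y⌋₊ + 2 / Real.log y)) * Real.log (⌊y⌋₊:ℝ) := by
        rw [neg_add, Real.exp_add]; ring
    _ ≤ Real.exp (-∑ p ∈ n.primeFactors, lpr p) * Real.log y := by
        apply mul_le_mul _ hle _ (Real.exp_pos _).le
        · apply Real.exp_le_exp.2; linarith
        · exact Real.log_nonneg (by linarith)

lemma totient_upper (a : ℝ) (ha : Real.exp (-Real.eulerMascheroniConstant) < a) :
    ∃ᶠ n : ℕ in atTop, (n.totient : ℝ) / n * Real.log (Real.log n) ≤ a := by
  have hlog : Tendsto (fun n : ℕ => Real.log n) atTop atTop :=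
    Real.tendsto_log_atTop.comp tendsto_natCast_atTop_atTop
  have h1 : Tendsto (fun x : ℕ => Real.exp (-lprSum x) * (Real.log x + Real.log (Real.log 4))) atTop
      (nhds (Real.exp (-Real.eulerMascheroniConstant))) := by
    have h2 : Tendsto (fun x : ℕ => 1 + Real.log (Real.log 4) / Real.log x) atTop (nhds 1) := by
      have := (tendsto_const_nhds (x := Real.log (Real.log 4))).div_atTop hlog
      simpa using this.const_add 1
    have h3 := mertens_three.mul h2
    rw [mul_one] at h3
    refine h3.congr' ?_
    filter_upwards [hlog.eventually_ge_atTop 1] with x hx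
    have : Real.log x ≠ 0 := by linarith
    field_simp
  obtain ⟨X, hX⟩ := eventually_atTop.1 (h1.eventually (gt_mem_nhds ha))
  rw [frequently_atTop]
  intro N
  obtain ⟨p, hpN, hp⟩ := Nat.exists_infinite_primes (max (max N X) 3)
  have hp3 : 3 ≤ p := (le_max_right _ _).trans hpN
  have hpX : X ≤ p := (le_max_right _ _).trans ((le_max_left _ _).trans hpN)
  have hpNN : N ≤ p := (le_max_left _ _).trans ((le_max_left _ _).trans hpN)
  have hdvd : p ∣ primorial p := by
    unfold primorial
    exact Finset.dvd_prod_of_mem (fun p => p) (by simp [hp])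
  have hpos : 0 < primorial p := primorial_pos p
  have hge : p ≤ primorial p := Nat.le_of_dvd hpos hdvd
  refine ⟨primorial p, hpNN.trans hge, ?_⟩
  refine le_trans ?_ (hX p hpX).le
  rw [totient_exp _ hpos.ne']
  have hpf : (primorial p).primeFactors = (Finset.range (p+1)).filter Nat.Prime := by
    unfold primorial
    apply Nat.primeFactors_prod
    intro q hq
    exact (Finset.mem_filter.1 hq).2
  rw [hpf, ← lprSum_eq_filter]
  apply mul_le_mul_of_nonneg_left _ (Real.exp_pos _).le
  have hp0 : (3:ℝ) ≤ p := by exact_mod_cast hp3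
  have hge' : (3:ℝ) ≤ primorial p := by exact_mod_cast hp3.trans hge
  have hL : 0 < Real.log (primorial p) := Real.log_pos (by linarith)
  have h4 : Real.log (primorial p) ≤ p * Real.log 4 := by
    rw [← Real.log_pow]
    apply Real.log_le_log (by linarith)
    exact_mod_cast primorial_le_four_pow p
  have h5 : 0 < Real.log 4 := Real.log_pos (by norm_num)
  rw [← Real.log_mul (by linarith) h5.ne']
  exact Real.log_le_log hL h4


lemma zmod_two_sq : ∀ z : ZMod 2, z ^ 2 = z := by decide

lemma sum_sq_char_odd (p : ℕ) [Fact p.Prime] (hp : p ≠ 2) (t : ZMod p) (ht : t ≠ 0) :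
    ∑ x : ZMod p, ZMod.stdAddChar (t * x ^ 2) =
      ((quadraticChar (ZMod p) t : ℤ) : ℂ) *
        ∑ a : ZMod p, ((quadraticChar (ZMod p) a : ℤ) : ℂ) * ZMod.stdAddChar a := by
  have hchar : ringChar (ZMod p) ≠ 2 := by rwa [ZMod.ringChar_zmod_n]
  have h1 : ∑ x : ZMod p, ZMod.stdAddChar (t * x ^ 2) =
      ∑ a : ZMod p, (((quadraticChar (ZMod p) a : ℤ) : ℂ) + 1) * ZMod.stdAddChar (t * a) := by
    rw [← Finset.sum_fiberwise Finset.univ (fun x : ZMod p => x ^ 2)]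
    apply Finset.sum_congr rfl
    intro a _
    rw [Finset.sum_congr rfl (g := fun _ => (ZMod.stdAddChar (t * a) : ℂ))
      (by intro x hx; rw [(Finset.mem_filter.1 hx).2])]
    rw [Finset.sum_const, nsmul_eq_mul]
    congr 1
    have h := quadraticChar_card_sqrts hchar a
    have h' : ((Finset.univ.filter (fun x : ZMod p => x ^ 2 = a)).card : ℤ)
        = quadraticChar (ZMod p) a + 1 := by
      rw [← h]
      congr 2
      ext x; simp
    exact_mod_cast h'
  have h2 : ∑ a : ZMod p, (ZMod.stdAddChar (t * a) : ℂ) = 0 := by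
    have := AddChar.sum_mulShift t (ZMod.isPrimitive_stdAddChar p)
    rw [if_neg ht] at this
    simpa [mul_comm] using this
  rw [h1]
  simp_rw [add_mul, one_mul]
  rw [Finset.sum_add_distrib, h2, add_zero, Finset.mul_sum]
  rw [← Equiv.sum_comp (Equiv.mulLeft₀ t ht)
    (fun a => ((quadraticChar (ZMod p) t : ℤ) : ℂ) *
      (((quadraticChar (ZMod p) a : ℤ) : ℂ) * ZMod.stdAddChar a))]
  apply Finset.sum_congr rfl
  intro a _
  have hsq : ((quadraticChar (ZMod p) t : ℤ) : ℂ) * ((quadraticChar (ZMod p) t : ℤ) : ℂ) = 1 := by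
    have := quadraticChar_sq_one ht
    rw [sq] at this
    exact_mod_cast this
  simp only [Equiv.mulLeft₀_apply, map_mul, Int.cast_mul]
  linear_combination (-((quadraticChar (ZMod p) a : ℤ) : ℂ) * ZMod.stdAddChar (t * a)) * hsq

lemma sum_gauss_pow (p k : ℕ) [Fact p.Prime] (hodd : Odd k) :
    ∑ t : ZMod p, (∑ x : ZMod p, (ZMod.stdAddChar (t * x ^ 2) : ℂ)) ^ k = (p:ℂ) ^ k := by
  have h0 : (∑ x : ZMod p, (ZMod.stdAddChar ((0 : ZMod p) * x ^ 2) : ℂ)) ^ k = (p:ℂ)^k := by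
    simp [ZMod.card]
  rw [← h0]
  have hk : k ≠ 0 := by rintro rfl; simp at hodd
  by_cases hp : p = 2
  · apply Finset.sum_eq_single _ _ (by simp)
    intro t _ ht
    have h2 : ∑ x : ZMod p, (ZMod.stdAddChar (t * x ^ 2) : ℂ) = 0 := by
      have := AddChar.sum_mulShift t (ZMod.isPrimitive_stdAddChar p)
      rw [if_neg ht, Nat.cast_zero] at this
      rw [← this]
      apply Finset.sum_congr rfl
      intro x _
      congr 1
      have : x ^ 2 = x := by
        subst hp
        exact zmod_two_sq x
      rw [this, mul_comm]
    rw [h2, zero_pow hk]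
  · have hchar : ringChar (ZMod p) ≠ 2 := by rwa [ZMod.ringChar_zmod_n]
    rw [← Finset.add_sum_erase _ _ (Finset.mem_univ (0 : ZMod p))]
    have : ∑ t ∈ Finset.univ.erase (0 : ZMod p),
        (∑ x : ZMod p, (ZMod.stdAddChar (t * x ^ 2) : ℂ)) ^ k = 0 := by
      rw [Finset.sum_congr rfl (g := fun t => ((quadraticChar (ZMod p) t : ℤ) : ℂ) *
        (∑ a : ZMod p, ((quadraticChar (ZMod p) a : ℤ) : ℂ) * ZMod.stdAddChar a) ^ k)]
      · rw [← Finset.sum_mul]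
        have hs := quadraticChar_sum_zero hchar
        rw [← Finset.add_sum_erase _ _ (Finset.mem_univ (0 : ZMod p)), MulChar.map_zero,
          zero_add] at hs
        rw [← Int.cast_sum, hs]
        simp
      · intro t ht
        have ht := (Finset.mem_erase.1 ht).1
        rw [sum_sq_char_odd p hp t ht, mul_pow]
        congr 1
        obtain ⟨m, rfl⟩ := hodd
        have := quadraticChar_sq_one ht
        have : ((quadraticChar (ZMod p) t : ℤ) : ℂ) ^ 2 = 1 := by exact_mod_cast this
        rw [pow_succ, pow_mul, this, one_pow, one_mul]
    rw [this, add_zero]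

lemma addChar_sum {A ι : Type*} [AddCommMonoid A] (ψ : AddChar A ℂ) (s : Finset ι) (f : ι → A) :
    ψ (∑ i ∈ s, f i) = ∏ i ∈ s, ψ (f i) := by
  classical
  induction s using Finset.induction_on with
  | empty => simp
  | insert a s ha ih => rw [Finset.sum_insert ha, Finset.prod_insert ha, AddChar.map_add_eq_mul, ih]

lemma card_zero_prime (p k : ℕ) [Fact p.Prime] (hodd : Odd k) :
    p * (Finset.univ.filter (fun x : Fin k → ZMod p => ∑ i, x i ^ 2 = 0)).card = p ^ k := by
  have h := sum_gauss_pow p k hodd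
  simp_rw [Fintype.sum_pow] at h
  rw [Finset.sum_comm] at h
  have h2 : ∀ x : Fin k → ZMod p, ∑ t : ZMod p, ∏ i, (ZMod.stdAddChar (t * x i ^ 2) : ℂ) =
      if ∑ i, x i ^ 2 = 0 then (p:ℂ) else 0 := by
    intro x
    have := AddChar.sum_mulShift (∑ i, x i ^ 2) (ZMod.isPrimitive_stdAddChar p)
    rw [ZMod.card] at this
    push_cast at this
    rw [← this]
    apply Finset.sum_congr rfl
    intro t _
    rw [Finset.mul_sum, addChar_sum]
  simp_rw [h2] at h
  rw [← Finset.sum_filter, Finset.sum_const, nsmul_eq_mul, mul_comm] at h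
  exact_mod_cast h

lemma genTotient_prime_s7 (p k : ℕ) (hp : p.Prime) (hodd : Odd k) :
    genTotient k p * p = p ^ k * (p - 1) := by
  haveI := Fact.mk hp
  have h := card_zero_prime p k hodd
  have h1 : genTotient k p =
      (Finset.univ.filter (fun x : Fin k → ZMod p => ¬ ∑ i, x i ^ 2 = 0)).card := by
    rw [genTotient, Nat.card_eq_fintype_card, Fintype.card_subtype]
    congr 1
    ext x
    simp [isUnit_iff_ne_zero]
  have h2 := Finset.card_filter_add_card_filter_not (s := (Finset.univ : Finset (Fin k → ZMod p)))
    (fun x : Fin k → ZMod p => ∑ i, x i ^ 2 = 0)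
  rw [← h1, Finset.card_univ, Fintype.card_fun, ZMod.card, Fintype.card_fin] at h2
  obtain ⟨q, rfl⟩ : ∃ q, p = q + 1 := ⟨p - 1, by have := hp.pos; omega⟩
  rw [Nat.add_sub_cancel]
  generalize (Finset.univ.filter (fun x : Fin k → ZMod (q+1) => ∑ i, x i ^ 2 = 0)).card = c at *
  nlinarith

lemma zmod_isUnit_castHom (p a : ℕ) (ha : 0 < a) (h : p ∣ p ^ a) [NeZero (p ^ a)]
    (z : ZMod (p ^ a)) :
    IsUnit z ↔ IsUnit (ZMod.castHom h (ZMod p) z) := by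
  have hz : z = ((z.val : ℕ) : ZMod (p ^ a)) := by simp
  rw [hz, map_natCast, ZMod.isUnit_iff_coprime, ZMod.isUnit_iff_coprime,
    Nat.coprime_pow_right_iff ha]

lemma genTotient_prime_pow (p a k : ℕ) (hp : p.Prime) (ha : 0 < a) :
    genTotient k (p ^ a) * p ^ k = genTotient k p * (p ^ a) ^ k := by
  classical
  haveI := Fact.mk hp
  haveI : NeZero (p ^ a) := ⟨pow_ne_zero _ hp.ne_zero⟩
  have hd : p ∣ p ^ a := dvd_pow_self p ha.ne'
  let c := ZMod.castHom hd (ZMod p)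
  let f : (Fin k → ZMod (p ^ a)) →+ (Fin k → ZMod p) :=
    { toFun := fun x i => c (x i)
      map_zero' := by ext i; simp
      map_add' := by intro x y; ext i; simp }
  have hsurj : Function.Surjective f := by
    intro y
    choose g hg using fun i => ZMod.castHom_surjective hd (y i)
    exact ⟨g, funext hg⟩
  have hfib : ∀ y, (Finset.univ.filter (fun x => f x = y)).card =
      (Finset.univ.filter (fun x => f x = 0)).card := fun y =>
    AddMonoidHom.card_fiber_eq_of_mem_range f (hsurj y) (hsurj 0)
  set K := (Finset.univ.filter (fun x => f x = 0)).card with hK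
  have hsum : ∀ x : Fin k → ZMod (p ^ a), c (∑ i, x i ^ 2) = ∑ i, (f x) i ^ 2 := by
    intro x
    simp [f, map_sum]
  have e1 : (p ^ a) ^ k = p ^ k * K := by
    have := Finset.card_eq_sum_card_fiberwise (f := f) (s := Finset.univ) (t := Finset.univ)
      (by intro x _; simp)
    simp_rw [hfib] at this
    simpa [ZMod.card] using this
  have e2 : genTotient k (p ^ a) = genTotient k p * K := by
    rw [genTotient, genTotient, Nat.card_eq_fintype_card, Fintype.card_subtype,
      Nat.card_eq_fintype_card, Fintype.card_subtype]
    have := Finset.card_eq_sum_card_fiberwise (f := f)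
      (s := Finset.univ.filter (fun x : Fin k → ZMod (p ^ a) => IsUnit (∑ i, x i ^ 2)))
      (t := Finset.univ.filter (fun x : Fin k → ZMod p => IsUnit (∑ i, x i ^ 2)))
      (by
        intro x hx
        simp only [Finset.coe_filter, Finset.mem_univ, true_and, Set.mem_setOf_eq] at hx ⊢
        rw [← hsum]
        exact hx.map c)
    rw [this, ← smul_eq_mul, ← Finset.sum_const]
    apply Finset.sum_congr rfl
    intro y hy
    rw [← hfib y]
    congr 1
    ext x
    simp only [Finset.mem_filter, Finset.mem_univ, true_and] at hy ⊢
    constructor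
    · exact fun h => h.2
    · intro h
      refine ⟨?_, h⟩
      rw [zmod_isUnit_castHom p a ha hd]
      change IsUnit (c _)
      rw [hsum, h]
      exact hy
  rw [e1, e2]
  ring

lemma genTotient_mul (k m n : ℕ) (h : m.Coprime n) :
    genTotient k (m * n) = genTotient k m * genTotient k n := by
  unfold genTotient
  rw [← Nat.card_prod]
  apply Nat.card_congr
  let e := ZMod.chineseRemainder h
  let E : (Fin k → ZMod (m * n)) ≃ (Fin k → ZMod m) × (Fin k → ZMod n) :=
    (Equiv.piCongrRight (fun _ => e.toEquiv)).trans
      (Equiv.arrowProdEquivProdArrow (Fin k) (fun _ => ZMod m) (fun _ => ZMod n))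
  refine (Equiv.subtypeEquiv E (q := fun y => IsUnit (∑ i, y.1 i ^ 2) ∧ IsUnit (∑ i, y.2 i ^ 2)) ?_).trans
    (Equiv.subtypeProdEquivProd (p := fun y : Fin k → ZMod m => IsUnit (∑ i, y i ^ 2))
      (q := fun y : Fin k → ZMod n => IsUnit (∑ i, y i ^ 2)))
  intro x
  have h1 : IsUnit (∑ i, x i ^ 2) ↔ IsUnit (e (∑ i, x i ^ 2)) :=
    (MulEquiv.isUnit_map e).symm
  rw [h1, Prod.isUnit_iff, map_sum, Prod.fst_sum, Prod.snd_sum]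
  simp only [map_pow, Prod.pow_fst, Prod.pow_snd]
  rfl

lemma genTotient_eq (k : ℕ) (hodd : Odd k) (n : ℕ) (hn : 0 < n) :
    genTotient k n * n = n ^ k * n.totient := by
  revert hn
  induction n using Nat.recOnPosPrimePosCoprime with
  | zero => intro h; omega
  | one =>
    intro _
    have : genTotient k 1 = 1 := by
      rw [genTotient, Nat.card_eq_one_iff_unique]
      refine ⟨⟨fun x y => Subtype.ext (Subsingleton.elim _ _)⟩, ⟨⟨0, isUnit_of_subsingleton _⟩⟩⟩
    simp [this]
  | prime_pow p a hp ha =>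
    intro _
    have h1 := genTotient_prime_s7 p k hp hodd
    have h2 := genTotient_prime_pow p a k hp ha
    rw [Nat.totient_prime_pow hp ha]
    obtain ⟨b, rfl⟩ : ∃ b, a = b + 1 := ⟨a - 1, by omega⟩
    rw [Nat.add_sub_cancel]
    have hpk : 0 < p ^ k := pow_pos hp.pos k
    apply Nat.eq_of_mul_eq_mul_left hpk
    calc p ^ k * (genTotient k (p ^ (b+1)) * p ^ (b+1))
        = (genTotient k (p ^ (b+1)) * p ^ k) * (p ^ b * p) := by ring
      _ = (genTotient k p * p) * ((p ^ (b+1)) ^ k * p ^ b) := by rw [h2]; ring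
      _ = p ^ k * ((p ^ (b + 1)) ^ k * (p ^ b * (p - 1))) := by rw [h1]; ring
  | coprime m n hm hn h ihm ihn =>
    intro _
    have h1 := ihm (by omega)
    have h2 := ihn (by omega)
    rw [genTotient_mul k m n h, Nat.totient_mul h]
    calc genTotient k m * genTotient k n * (m * n)
        = (genTotient k m * m) * (genTotient k n * n) := by ring
      _ = (m * n) ^ k * (m.totient * n.totient) := by rw [h1, h2]; ring

/-- Theorem 7 (keven, odd case): for odd `k`, the minimal order of `Φ_k(n)` is
`e^{-γ} n^k / log log n`. -/
theorem minimal_order_odd (k : ℕ) (hk : 1 ≤ k) (hodd : Odd k) :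
    Filter.liminf
        (fun n : ℕ => (genTotient k n : ℝ) * Real.log (Real.log n) / (n : ℝ) ^ k)
        Filter.atTop =
      Real.exp (-Real.eulerMascheroniConstant) := by
  have hcongr : (fun n : ℕ => (genTotient k n : ℝ) * Real.log (Real.log n) / (n : ℝ) ^ k)
      =ᶠ[atTop] (fun n : ℕ => (n.totient : ℝ) / n * Real.log (Real.log n)) := by
    filter_upwards [eventually_ge_atTop 1] with n hn
    have h := genTotient_eq k hodd n hn
    have h' : (genTotient k n : ℝ) * n = (n:ℝ) ^ k * n.totient := by exact_mod_cast h
    have hn0 : (n:ℝ) ≠ 0 := by positivity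
    have h2 : (genTotient k n : ℝ) = (n:ℝ) ^ k * ((n.totient : ℝ) / n) := by
      field_simp
      linarith
    rw [h2]
    field_simp
  rw [Filter.liminf_congr hcongr]
  apply le_antisymm
  · apply le_of_forall_gt_imp_ge_of_dense
    intro a ha
    refine Filter.liminf_le_of_frequently_le (totient_upper a ha) ?_
    exact ⟨_, (totient_lower (Real.exp (-Real.eulerMascheroniConstant) - 1) (by linarith))⟩
  · apply le_of_forall_lt_imp_le_of_dense
    intro a ha
    apply Filter.le_liminf_of_le _ (totient_lower a ha)
    exact Filter.IsCoboundedUnder.of_frequently_le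
      (totient_upper (Real.exp (-Real.eulerMascheroniConstant) + 1) (by linarith))
end
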